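/- arXiv:1606.00272 — 2 statements merged into one kernel-verified Lean document; each statement's English description precedes it below -/
import Mathlib

section
/- Let R be a commutative ring, I an ideal of R, and n ≥ 4. There exists a group anti-automorphism τ of St*(n,R,I) (i.e., a bijection with τ(gh) = τ(h)τ(g) for all g,h) such that τ(F(u,v)) = S(v,u) and τ(S(u,v)) = F(v,u) for all generators; moreover τ∘τ = id. -/
/-- The set of elementary transvections inside `GL n R`. -/
def transvectionSet (n : ℕ) (R : Type) [CommRing R] :
    Set (Matrix.GeneralLinearGroup (Fin n) R) :=
  {M | ∃ (i j : Fin n) (_ : i ≠ j) (r : R),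
    (M : Matrix (Fin n) (Fin n) R) = 1 + Matrix.single i j r}

/-- The elementary subgroup `E(n, R) ≤ GL(n, R)`. -/
def Elem (n : ℕ) (R : Type) [CommRing R] : Subgroup (Matrix.GeneralLinearGroup (Fin n) R) :=
  Subgroup.closure (transvectionSet n R)

/-- The set `E(n,R)e₁` of first columns of elementary matrices. -/
def Ecol (n : ℕ) (R : Type) [CommRing R] [NeZero n] : Set (Fin n → R) :=
  {u | ∃ M ∈ Elem n R, u = fun i => (M : Matrix (Fin n) (Fin n) R) i 0}

/-- The matrix `t(u, v) = 1 + u·vᵗ`. -/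
def tMat {n : ℕ} {R : Type} [CommRing R] (u v : Fin n → R) : Matrix (Fin n) (Fin n) R :=
  1 + Matrix.vecMulVec u v

/-- The `k`-th column of an invertible matrix. -/
def colM {n : ℕ} {R : Type} [CommRing R] (M : Matrix.GeneralLinearGroup (Fin n) R)
    (k : Fin n) : Fin n → R :=
  fun i => (M : Matrix (Fin n) (Fin n) R) i k

/-- The `k`-th column of the contragredient matrix `M* = (Mᵗ)⁻¹ = (M⁻¹)ᵗ`. -/
def starCol {n : ℕ} {R : Type} [CommRing R] (M : Matrix.GeneralLinearGroup (Fin n) R)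
    (k : Fin n) : Fin n → R :=
  fun i => ((M⁻¹ : Matrix.GeneralLinearGroup (Fin n) R) : Matrix (Fin n) (Fin n) R) k i

/-- Unimodularity of the `n × 2` matrix with columns `u`, `w`: it admits a left inverse. -/
def Unimodular2 {n : ℕ} {R : Type} [CommRing R] (u w : Fin n → R) : Prop :=
  ∃ x y : Fin n → R,
    dotProduct x u = 1 ∧ dotProduct x w = 0 ∧
    dotProduct y u = 0 ∧ dotProduct y w = 1
/-- Generators `F(u,v)` and `S(u,v)` of the group `St*(n, R, I)`. -/
inductive StarGen (n : ℕ) (R : Type) [CommRing R] [NeZero n] (I : Ideal R) : Type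
  | F (u v : Fin n → R) (hu : u ∈ Ecol n R) (hv : ∀ i, v i ∈ I)
      (ho : dotProduct u v = 0) : StarGen n R I
  | S (u v : Fin n → R) (hu : ∀ i, u i ∈ I) (hv : v ∈ Ecol n R)
      (ho : dotProduct u v = 0) : StarGen n R I

/-- The relations (R1)–(R4) of the group `St*(n, R, I)`. -/
inductive StarRels (n : ℕ) (R : Type) [CommRing R] [NeZero n] (I : Ideal R) :
    FreeGroup (StarGen n R I) → Prop
  | addF (u v w : Fin n → R) (hu : u ∈ Ecol n R) (hv : ∀ i, v i ∈ I) (hw : ∀ i, w i ∈ I)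
      (hvw : ∀ i, (v + w) i ∈ I) (o1 : dotProduct u v = 0)
      (o2 : dotProduct u w = 0) (o3 : dotProduct u (v + w) = 0) :
      StarRels n R I ((FreeGroup.of (StarGen.F u v hu hv o1) : FreeGroup (StarGen n R I)) *
        FreeGroup.of (StarGen.F u w hu hw o2) * (FreeGroup.of (StarGen.F u (v + w) hu hvw o3))⁻¹)
  | addS (u w v : Fin n → R) (hu : ∀ i, u i ∈ I) (hw : ∀ i, w i ∈ I)
      (huw : ∀ i, (u + w) i ∈ I) (hv : v ∈ Ecol n R) (o1 : dotProduct u v = 0)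
      (o2 : dotProduct w v = 0) (o3 : dotProduct (u + w) v = 0) :
      StarRels n R I ((FreeGroup.of (StarGen.S u v hu hv o1) : FreeGroup (StarGen n R I)) *
        FreeGroup.of (StarGen.S w v hw hv o2) * (FreeGroup.of (StarGen.S (u + w) v huw hv o3))⁻¹)
  | conjF (u v u' v' : Fin n → R) (hu : u ∈ Ecol n R) (hv : ∀ i, v i ∈ I)
      (o1 : dotProduct u v = 0) (hu' : u' ∈ Ecol n R) (hv' : ∀ i, v' i ∈ I)
      (o2 : dotProduct u' v' = 0)
      (hu'' : Matrix.mulVec (tMat u v) u' ∈ Ecol n R)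
      (hv'' : ∀ i, Matrix.mulVec (1 - Matrix.vecMulVec v u) v' i ∈ I)
      (o3 : dotProduct (Matrix.mulVec (tMat u v) u')
        (Matrix.mulVec (1 - Matrix.vecMulVec v u) v') = 0) :
      StarRels n R I ((FreeGroup.of (StarGen.F u v hu hv o1) : FreeGroup (StarGen n R I)) *
        FreeGroup.of (StarGen.F u' v' hu' hv' o2) * (FreeGroup.of (StarGen.F u v hu hv o1))⁻¹ *
        (FreeGroup.of (StarGen.F (Matrix.mulVec (tMat u v) u')
          (Matrix.mulVec (1 - Matrix.vecMulVec v u) v') hu'' hv'' o3))⁻¹)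
  | coinc (M : Matrix.GeneralLinearGroup (Fin n) R) (hM : M ∈ Elem n R) (a : R) (ha : a ∈ I)
      (h1 : colM M 0 ∈ Ecol n R) (h2 : ∀ i, (a • starCol M 1) i ∈ I)
      (h3 : dotProduct (colM M 0) (a • starCol M 1) = 0)
      (h4 : ∀ i, (a • colM M 0) i ∈ I) (h5 : starCol M 1 ∈ Ecol n R)
      (h6 : dotProduct (a • colM M 0) (starCol M 1) = 0) :
      StarRels n R I ((FreeGroup.of (StarGen.F (colM M 0) (a • starCol M 1) h1 h2 h3) :
          FreeGroup (StarGen n R I)) *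
        (FreeGroup.of (StarGen.S (a • colM M 0) (starCol M 1) h4 h5 h6))⁻¹)

/-- The group `St*(n, R, I)`. -/
abbrev StStar (n : ℕ) (R : Type) [CommRing R] [NeZero n] (I : Ideal R) : Type :=
  PresentedGroup {w | StarRels n R I w}

/-!
The presentation of `St*(n, R, I)` is symmetric under `F(u, v) ↔ S(v, u)` and reversal of products,
except that (R3) has no counterpart for the generators `S`; the point is to derive one.

For `n ≥ 3` products of transvections move any pair of distinct indices to `(1, 2)`,
so (R4) gives `F(Meᵢ, M*eⱼ a) = S(Meᵢ a, M*eⱼ)` for all `i ≠ j`, where `M* = (M⁻¹)ᵗ`. The vectors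
of `Iⁿ` orthogonal to `v = M*e₁` are `I`-linear combinations of the `Meᵢ` with `i ≠ 1`, so `S(u, v)`
is a product of generators `F(Meᵢ, v aᵢ)`. Hence, by (R3), `S(u, v)` conjugates every
`F(u', v')` to `F(gu', g*v')` with `g = t(u, v)`. The same decomposition applied to `S(u', v')`
shows that an element which conjugates the generators `F` in this way does so for the generators
`S` too.
-/

section GeneralLinear

open Matrix

variable {ι R : Type*} [CommRing R]

lemma smul_apply_mem {I : Ideal R} {a : R} (ha : a ∈ I) (v : ι → R) (i : ι) :
    (a • v) i ∈ I :=
  I.mul_mem_right _ ha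

variable [Fintype ι]

lemma mulVec_apply_mem {I : Ideal R} (A : Matrix ι ι R) {v : ι → R}
    (hv : ∀ i, v i ∈ I) (i : ι) : (A *ᵥ v) i ∈ I :=
  I.map_pi v hv A.mulVecLin i

lemma vecMulVec_mul_vecMulVec_eq_zero {v w : ι → R} (h : v ⬝ᵥ w = 0) (u x : ι → R) :
    vecMulVec u v * vecMulVec w x = 0 := by
  rw [vecMulVec_mul_vecMulVec, h, zero_smul, vecMulVec_zero]

variable [DecidableEq ι]

lemma smul_single_dotProduct_single_of_ne {i j : ι} (hij : i ≠ j) (a : R) :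
    (a • Pi.single i 1 : ι → R) ⬝ᵥ Pi.single j 1 = 0 := by
  rw [dotProduct_single_one, Pi.smul_apply, Pi.single_eq_of_ne hij.symm, smul_zero]

/-- The contragredient automorphism `M ↦ M* = (M⁻¹)ᵗ` of the general linear group. It governs how
the second entry of a pair `(u, v)` moves when `M` acts on the first one. -/
def contragredient : GL ι R →* GL ι R where
  toFun M := ⟨M⁻¹.valᵀ, M.valᵀ, by rw [← transpose_mul, Units.mul_inv, transpose_one],
    by rw [← transpose_mul, Units.inv_mul, transpose_one]⟩
  map_one' := Units.ext (by simp)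
  map_mul' M N := Units.ext (by simp only [_root_.mul_inv_rev, Units.val_mul, transpose_mul])

lemma contragredient_contragredient (M : GL ι R) : contragredient (contragredient M) = M := rfl

lemma mulVec_dotProduct_contragredient_mulVec (M : GL ι R) (u v : ι → R) :
    (M.val *ᵥ u) ⬝ᵥ ((contragredient M).val *ᵥ v) = u ⬝ᵥ v := by
  change (M.val *ᵥ u) ⬝ᵥ (M⁻¹.valᵀ *ᵥ v) = u ⬝ᵥ v
  rw [dotProduct_mulVec, vecMul_transpose, mulVec_mulVec, Units.inv_mul, one_mulVec]

/-- The transvection `t(u, v) = 1 + u·vᵗ` with `uᵗv = 0`, as an element of the general linear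
group; its inverse is `1 - u·vᵗ`. -/
def transvectionGL (u v : ι → R) (h : u ⬝ᵥ v = 0) : GL ι R where
  val := 1 + vecMulVec u v
  inv := 1 - vecMulVec u v
  val_inv := by
    rw [← (Commute.one_left _).mul_self_sub_mul_self_eq, one_mul,
      vecMulVec_mul_vecMulVec_eq_zero (by rwa [dotProduct_comm]), sub_zero]
  inv_val := by
    rw [← (Commute.one_left _).mul_self_sub_mul_self_eq', one_mul,
      vecMulVec_mul_vecMulVec_eq_zero (by rwa [dotProduct_comm]), sub_zero]

lemma transvectionGL_zero_left (v : ι → R) :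
    transvectionGL 0 v (zero_dotProduct v) = 1 :=
  Units.ext (by simp [transvectionGL])

lemma transvectionGL_add_left {u w v : ι → R} (hu : u ⬝ᵥ v = 0) (hw : w ⬝ᵥ v = 0)
    (huw : (u + w) ⬝ᵥ v = 0) :
    transvectionGL (u + w) v huw = transvectionGL u v hu * transvectionGL w v hw := by
  have hzero : vecMulVec u v * vecMulVec w v = 0 :=
    vecMulVec_mul_vecMulVec_eq_zero (by rwa [dotProduct_comm]) u v
  ext1
  simp only [transvectionGL, Units.val_mul, add_mul, mul_add, hzero, add_vecMulVec, one_mul,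
    mul_one]
  abel

lemma transvectionGL_smul_left {u v : ι → R} {a : R} (h : (a • u) ⬝ᵥ v = 0)
    (h' : u ⬝ᵥ (a • v) = 0) : transvectionGL (a • u) v h = transvectionGL u (a • v) h' :=
  Units.ext (by simp only [transvectionGL, smul_vecMulVec, vecMulVec_smul])

lemma transvectionGL_conj (M : GL ι R) {u v : ι → R} (h : u ⬝ᵥ v = 0) :
    M * transvectionGL u v h * M⁻¹ =
      transvectionGL (M.val *ᵥ u) ((contragredient M).val *ᵥ v)
        (by rwa [mulVec_dotProduct_contragredient_mulVec]) := by
  have hv : (contragredient M).val *ᵥ v = v ᵥ* M⁻¹.val := mulVec_transpose _ _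
  ext1
  simp only [transvectionGL, hv, Units.val_mul, mul_add, add_mul, mul_one, mul_vecMulVec,
    vecMulVec_mul, Units.mul_inv]

lemma contragredient_transvectionGL {u v : ι → R} (h : u ⬝ᵥ v = 0) (h' : v ⬝ᵥ u = 0) :
    contragredient (transvectionGL u v h) = (transvectionGL v u h')⁻¹ := by
  ext1
  change (1 - vecMulVec u v)ᵀ = 1 - vecMulVec v u
  rw [transpose_sub, transpose_one, transpose_vecMulVec]

lemma contragredient_transvectionGL_val {u v : ι → R} (h : u ⬝ᵥ v = 0) :
    (contragredient (transvectionGL u v h)).val = 1 - vecMulVec v u := by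
  rw [contragredient_transvectionGL h (by rwa [dotProduct_comm])]
  rfl

lemma transvectionGL_mulVec {u v : ι → R} (h : u ⬝ᵥ v = 0) (x : ι → R) :
    (transvectionGL u v h).val *ᵥ x = x + (v ⬝ᵥ x) • u := by
  simp [transvectionGL, add_mulVec, vecMulVec_mulVec]

lemma contragredient_transvectionGL_mulVec {u v : ι → R} (h : u ⬝ᵥ v = 0) (x : ι → R) :
    (contragredient (transvectionGL u v h)).val *ᵥ x = x - (u ⬝ᵥ x) • v := by
  simp [contragredient_transvectionGL_val, sub_mulVec, vecMulVec_mulVec]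

end GeneralLinear

section Elementary

open Matrix

variable {n : ℕ} {R : Type} [CommRing R]

lemma colM_eq_mulVec_single (M : GL (Fin n) R) (k : Fin n) :
    colM M k = M.val *ᵥ Pi.single k 1 :=
  (mulVec_single_one M.val k).symm

lemma colM_mul (M N : GL (Fin n) R) (k : Fin n) : colM (M * N) k = M.val *ᵥ colM N k := by
  simp only [colM_eq_mulVec_single, Units.val_mul, mulVec_mulVec]

lemma colM_contragredient (M : GL (Fin n) R) (k : Fin n) :
    colM (contragredient M) k = starCol M k := rfl

lemma starCol_contragredient (M : GL (Fin n) R) (k : Fin n) :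
    starCol (contragredient M) k = colM M k := rfl

lemma starCol_mul (M N : GL (Fin n) R) (k : Fin n) :
    starCol (M * N) k = (contragredient M).val *ᵥ starCol N k := by
  rw [← colM_contragredient, map_mul, colM_mul, colM_contragredient]

lemma colM_dotProduct_starCol_of_ne (M : GL (Fin n) R) {i j : Fin n} (hij : i ≠ j) :
    colM M i ⬝ᵥ starCol M j = 0 := by
  rw [← colM_contragredient, colM_eq_mulVec_single, colM_eq_mulVec_single,
    mulVec_dotProduct_contragredient_mulVec, single_one_dotProduct, Pi.single_eq_of_ne hij]

lemma smul_colM_dotProduct_starCol_of_ne (M : GL (Fin n) R) {i j : Fin n} (hij : i ≠ j) (a : R) :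
    (a • colM M i) ⬝ᵥ starCol M j = 0 := by
  rw [smul_dotProduct, colM_dotProduct_starCol_of_ne M hij, smul_zero]

lemma colM_dotProduct_smul_starCol_of_ne (M : GL (Fin n) R) {i j : Fin n} (hij : i ≠ j) (a : R) :
    colM M i ⬝ᵥ (a • starCol M j) = 0 := by
  rw [dotProduct_smul, colM_dotProduct_starCol_of_ne M hij, smul_zero]

lemma eq_sum_smul_colM (M : GL (Fin n) R) (u : Fin n → R) :
    u = ∑ i, (u ⬝ᵥ starCol M i) • colM M i := by
  have hcoord : M⁻¹.val *ᵥ u = fun i => u ⬝ᵥ starCol M i :=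
    funext fun i => dotProduct_comm _ _
  calc
    u = M.val *ᵥ (M⁻¹.val *ᵥ u) := by rw [mulVec_mulVec, Units.mul_inv, one_mulVec]
    _ = ∑ i, (u ⬝ᵥ starCol M i) • colM M i := by
      simp only [hcoord, mulVec_eq_sum, op_smul_eq_smul]
      rfl

theorem orthogonal_starCol_induction {I : Ideal R} (M : GL (Fin n) R) (k : Fin n)
    {p : ∀ u : Fin n → R, (∀ i, u i ∈ I) → u ⬝ᵥ starCol M k = 0 → Prop}
    (zero : p 0 (fun _ => I.zero_mem) (zero_dotProduct _))
    (add : ∀ u w hu hw hu₀ hw₀, p u hu hu₀ → p w hw hw₀ →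
      p (u + w) (fun i => I.add_mem (hu i) (hw i)) (by rw [add_dotProduct, hu₀, hw₀, add_zero]))
    (smul_colM : ∀ i, ∀ hi : i ≠ k, ∀ a, ∀ ha : a ∈ I,
      p (a • colM M i) (smul_apply_mem ha _) (smul_colM_dotProduct_starCol_of_ne M hi a))
    (u : Fin n → R) (hu : ∀ i, u i ∈ I) (hu₀ : u ⬝ᵥ starCol M k = 0) : p u hu hu₀ := by
  suffices h : ∃ hs hs₀, p (∑ i, (u ⬝ᵥ starCol M i) • colM M i) hs hs₀ by
    simpa only [← eq_sum_smul_colM, hu, hu₀, implies_true, exists_true_left] using h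
  refine Finset.sum_induction _ (fun x => ∃ hx hx₀, p x hx hx₀) ?_ ⟨_, _, zero⟩ fun i _ => ?_
  · rintro x y ⟨hx, hx₀, px⟩ ⟨hy, hy₀, py⟩
    exact ⟨_, _, add x y hx hy hx₀ hy₀ px py⟩
  · rcases eq_or_ne i k with rfl | hi
    · rw [hu₀, zero_smul]
      exact ⟨_, _, zero⟩
    · exact ⟨_, _, smul_colM i hi _ (I.sum_mem fun j _ => I.mul_mem_right _ (hu j))⟩

lemma contragredient_mem_Elem {M : GL (Fin n) R} (hM : M ∈ Elem n R) :
    contragredient M ∈ Elem n R := by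
  have hle : Elem n R ≤ (Elem n R).comap contragredient := by
    refine (Subgroup.closure_le _).2 ?_
    rintro M ⟨i, j, hij, r, hM⟩
    refine inv_mem_iff.1 (Subgroup.subset_closure ⟨j, i, hij.symm, r, ?_⟩)
    change M.valᵀ = _
    rw [hM, transpose_add, transpose_one, transpose_single]
  exact hle hM

lemma transvectionGL_single_mem_Elem {i j : Fin n} (hij : i ≠ j) (a : R) :
    transvectionGL (a • Pi.single i 1) (Pi.single j 1) (smul_single_dotProduct_single_of_ne hij a)
      ∈ Elem n R := by
  refine Subgroup.subset_closure ⟨i, j, hij, a, ?_⟩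
  simp only [transvectionGL]
  rw [smul_vecMulVec, ← single_eq_single_vecMulVec_single, smul_single, smul_eq_mul, mul_one]

theorem exists_mem_Elem_colM_eq_single (R : Type) [CommRing R] (i k : Fin n) :
    ∃ P ∈ Elem n R, colM P k = Pi.single i 1 ∧
      ∀ j, j ≠ i → j ≠ k → starCol P j = Pi.single j 1 := by
  rcases eq_or_ne i k with rfl | hik
  · refine ⟨1, one_mem _, ?_, fun j _ _ => ?_⟩
    · rw [colM_eq_mulVec_single, Units.val_one, one_mulVec]
    · rw [← colM_contragredient, map_one, colM_eq_mulVec_single, Units.val_one, one_mulVec]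
  -- `eₖ ↦ eₖ + eᵢ ↦ eᵢ`
  refine ⟨_, mul_mem (transvectionGL_single_mem_Elem hik.symm (-1))
    (transvectionGL_single_mem_Elem hik 1), ?_, fun j hji hjk => ?_⟩
  · rw [colM_mul, colM_eq_mulVec_single, transvectionGL_mulVec, transvectionGL_mulVec]
    simp [hik]
  · rw [starCol_mul, ← colM_contragredient, colM_eq_mulVec_single,
      contragredient_transvectionGL_mulVec, contragredient_transvectionGL_mulVec]
    simp [hji.symm, hjk.symm]

lemma exists_mem_Elem_colM_eq {M : GL (Fin n) R} (hM : M ∈ Elem n R) {i j : Fin n} (hij : i ≠ j)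
    {k : Fin n} (hkj : k ≠ j) :
    ∃ N ∈ Elem n R, colM N k = colM M i ∧ starCol N j = starCol M j := by
  obtain ⟨P, hP, hcol, hstar⟩ := exists_mem_Elem_colM_eq_single R i k
  refine ⟨M * P, mul_mem hM hP, ?_, ?_⟩
  · rw [colM_mul, hcol, colM_eq_mulVec_single]
  · rw [starCol_mul, hstar j hij.symm hkj.symm, ← colM_contragredient, colM_eq_mulVec_single]

lemma exists_mem_Elem_starCol_eq {M : GL (Fin n) R} (hM : M ∈ Elem n R) {i j : Fin n}
    (hij : i ≠ j) {k : Fin n} (hki : k ≠ i) :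
    ∃ N ∈ Elem n R, colM N i = colM M i ∧ starCol N k = starCol M j := by
  obtain ⟨N, hN, hcol, hstar⟩ :=
    exists_mem_Elem_colM_eq (contragredient_mem_Elem hM) hij.symm hki
  exact ⟨contragredient N, contragredient_mem_Elem hN, hstar, hcol⟩

theorem exists_mem_Elem_colM_eq_starCol_eq (hn : 3 ≤ n) {M : GL (Fin n) R} (hM : M ∈ Elem n R)
    {i j i' j' : Fin n} (hij : i ≠ j) (hij' : i' ≠ j') :
    ∃ N ∈ Elem n R, colM N i' = colM M i ∧ starCol N j' = starCol M j := by
  obtain ⟨k, hkj, hkj'⟩ := Fin.exists_ne_and_ne_of_two_lt j j' hn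
  obtain ⟨N₁, hN₁, hcol₁, hstar₁⟩ := exists_mem_Elem_colM_eq hM hij hkj
  obtain ⟨N₂, hN₂, hcol₂, hstar₂⟩ := exists_mem_Elem_starCol_eq hN₁ hkj hkj'.symm
  obtain ⟨N₃, hN₃, hcol₃, hstar₃⟩ := exists_mem_Elem_colM_eq hN₂ hkj' hij'
  exact ⟨N₃, hN₃, by rw [hcol₃, hcol₂, hcol₁], by rw [hstar₃, hstar₂, hstar₁]⟩

variable [NeZero n]

lemma colM_mem_Ecol {M : GL (Fin n) R} (hM : M ∈ Elem n R) (i : Fin n) : colM M i ∈ Ecol n R := by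
  obtain ⟨P, hP, hcol, -⟩ := exists_mem_Elem_colM_eq_single R i 0
  refine ⟨M * P, mul_mem hM hP, ?_⟩
  change _ = colM (M * P) 0
  rw [colM_mul, hcol, colM_eq_mulVec_single]

lemma starCol_mem_Ecol {M : GL (Fin n) R} (hM : M ∈ Elem n R) (i : Fin n) :
    starCol M i ∈ Ecol n R :=
  colM_mem_Ecol (contragredient_mem_Elem hM) i

lemma exists_starCol_eq_of_mem_Ecol {v : Fin n → R} (hv : v ∈ Ecol n R) :
    ∃ M ∈ Elem n R, starCol M 0 = v := by
  obtain ⟨M, hM, rfl⟩ := hv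
  exact ⟨contragredient M, contragredient_mem_Elem hM, starCol_contragredient M 0⟩

lemma mulVec_mem_Ecol {g : GL (Fin n) R} (hg : g ∈ Elem n R) {u : Fin n → R}
    (hu : u ∈ Ecol n R) : g.val *ᵥ u ∈ Ecol n R := by
  obtain ⟨M, hM, rfl⟩ := hu
  exact ⟨g * M, mul_mem hg hM, (colM_mul g M 0).symm⟩

theorem transvectionGL_mem_Elem_of_right {u v : Fin n → R} (hv : v ∈ Ecol n R)
    (h : u ⬝ᵥ v = 0) : transvectionGL u v h ∈ Elem n R := by
  obtain ⟨M, hM, rfl⟩ := exists_starCol_eq_of_mem_Ecol hv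
  induction u, fun i => (Submodule.mem_top : u i ∈ (⊤ : Ideal R)), h
    using orthogonal_starCol_induction M 0 with
  | zero => exact transvectionGL_zero_left (starCol M 0) ▸ one_mem _
  | add u w _ _ hu₀ hw₀ hu hw =>
    exact transvectionGL_add_left hu₀ hw₀ _ ▸ mul_mem hu hw
  | smul_colM i hi a _ =>
    have hconj := mul_mem (mul_mem hM (transvectionGL_single_mem_Elem hi a)) (inv_mem hM)
    simpa only [transvectionGL_conj, mulVec_smul, ← colM_eq_mulVec_single, colM_contragredient]
      using hconj

theorem transvectionGL_mem_Elem_of_left {u v : Fin n → R} (hu : u ∈ Ecol n R)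
    (h : u ⬝ᵥ v = 0) : transvectionGL u v h ∈ Elem n R := by
  have h' : v ⬝ᵥ u = 0 := by rwa [dotProduct_comm]
  rw [← contragredient_contragredient (transvectionGL u v h), contragredient_transvectionGL h h']
  exact contragredient_mem_Elem (inv_mem (transvectionGL_mem_Elem_of_right hu h'))

end Elementary

namespace StStar

open Matrix

variable {n : ℕ} {R : Type} [CommRing R] [NeZero n] {I : Ideal R}

open Classical in
/-- The generator `F(u, v)` of `St*(n, R, I)`, extended by `1` to pairs `(u, v)` which do not index
a generator, so that its arguments can be rewritten freely. -/
noncomputable def genF (I : Ideal R) (u v : Fin n → R) : StStar n R I :=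
  if h : u ∈ Ecol n R ∧ (∀ i, v i ∈ I) ∧ u ⬝ᵥ v = 0 then
    PresentedGroup.of (StarGen.F u v h.1 h.2.1 h.2.2) else 1

open Classical in
/-- The generator `S(u, v)` of `St*(n, R, I)`, extended by `1` to pairs `(u, v)` which do not index
a generator, so that its arguments can be rewritten freely. -/
noncomputable def genS (I : Ideal R) (u v : Fin n → R) : StStar n R I :=
  if h : (∀ i, u i ∈ I) ∧ v ∈ Ecol n R ∧ u ⬝ᵥ v = 0 then
    PresentedGroup.of (StarGen.S u v h.1 h.2.1 h.2.2) else 1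

lemma genF_eq_of {u v : Fin n → R} (hu : u ∈ Ecol n R) (hv : ∀ i, v i ∈ I) (ho : u ⬝ᵥ v = 0) :
    genF I u v = PresentedGroup.of (StarGen.F u v hu hv ho) :=
  dif_pos ⟨hu, hv, ho⟩

lemma genS_eq_of {u v : Fin n → R} (hu : ∀ i, u i ∈ I) (hv : v ∈ Ecol n R) (ho : u ⬝ᵥ v = 0) :
    genS I u v = PresentedGroup.of (StarGen.S u v hu hv ho) :=
  dif_pos ⟨hu, hv, ho⟩

lemma genF_add {u v w : Fin n → R} (hu : u ∈ Ecol n R) (hv : ∀ i, v i ∈ I) (hw : ∀ i, w i ∈ I)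
    (hv₀ : u ⬝ᵥ v = 0) (hw₀ : u ⬝ᵥ w = 0) : genF I u (v + w) = genF I u v * genF I u w := by
  have hvw : ∀ i, (v + w) i ∈ I := fun i => I.add_mem (hv i) (hw i)
  have hvw₀ : u ⬝ᵥ (v + w) = 0 := by rw [dotProduct_add, hv₀, hw₀, add_zero]
  rw [genF_eq_of hu hv hv₀, genF_eq_of hu hw hw₀, genF_eq_of hu hvw hvw₀]
  exact (PresentedGroup.mk_eq_mk_of_mul_inv_mem
    (StarRels.addF u v w hu hv hw hvw hv₀ hw₀ hvw₀)).symm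

lemma genS_add {u w v : Fin n → R} (hu : ∀ i, u i ∈ I) (hw : ∀ i, w i ∈ I) (hv : v ∈ Ecol n R)
    (hu₀ : u ⬝ᵥ v = 0) (hw₀ : w ⬝ᵥ v = 0) : genS I (u + w) v = genS I u v * genS I w v := by
  have huw : ∀ i, (u + w) i ∈ I := fun i => I.add_mem (hu i) (hw i)
  have huw₀ : (u + w) ⬝ᵥ v = 0 := by rw [add_dotProduct, hu₀, hw₀, add_zero]
  rw [genS_eq_of hu hv hu₀, genS_eq_of hw hv hw₀, genS_eq_of huw hv huw₀]
  exact (PresentedGroup.mk_eq_mk_of_mul_inv_mem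
    (StarRels.addS u w v hu hw huw hv hu₀ hw₀ huw₀)).symm

lemma genS_zero {v : Fin n → R} (hv : v ∈ Ecol n R) : genS I 0 v = 1 := by
  have h := genS_add (u := 0) (w := 0) (fun _ => I.zero_mem) (fun _ => I.zero_mem) hv
    (zero_dotProduct v) (zero_dotProduct v)
  rw [add_zero] at h
  exact left_eq_mul.1 h

lemma genS_neg {u v : Fin n → R} (hu : ∀ i, u i ∈ I) (hv : v ∈ Ecol n R) (ho : u ⬝ᵥ v = 0) :
    genS I (-u) v = (genS I u v)⁻¹ := by
  have ho' : (-u) ⬝ᵥ v = 0 := by rw [neg_dotProduct, ho, neg_zero]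
  rw [eq_inv_iff_mul_eq_one, ← genS_add (u := -u) (fun i => I.neg_mem (hu i)) hu hv ho' ho,
    neg_add_cancel, genS_zero hv]

/-- The element `x` acts on the generators `F(u, v)` by conjugation as `g ∈ E(n, R)` acts on the
pairs `(u, v)`. Relation (R3) says that `F(u, v)` acts as `t(u, v)`. -/
structure ConjActsAs (x : StStar n R I) (g : GL (Fin n) R) : Prop where
  mem_Elem : g ∈ Elem n R
  conj_genF : ∀ {u v : Fin n → R}, u ∈ Ecol n R → (∀ i, v i ∈ I) → u ⬝ᵥ v = 0 →
    x * genF I u v * x⁻¹ = genF I (g.val *ᵥ u) ((contragredient g).val *ᵥ v)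

lemma ConjActsAs.one : ConjActsAs (1 : StStar n R I) 1 :=
  ⟨one_mem _, fun _ _ _ => by simp⟩

lemma ConjActsAs.mul {x y : StStar n R I} {g h : GL (Fin n) R} (hx : ConjActsAs x g)
    (hy : ConjActsAs y h) : ConjActsAs (x * y) (g * h) where
  mem_Elem := mul_mem hx.mem_Elem hy.mem_Elem
  conj_genF {u v} hu hv ho := by
    calc
      x * y * genF I u v * (x * y)⁻¹ = x * (y * genF I u v * y⁻¹) * x⁻¹ := by group
      _ = genF I (g.val *ᵥ (h.val *ᵥ u))
            ((contragredient g).val *ᵥ ((contragredient h).val *ᵥ v)) := by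
        rw [hy.conj_genF hu hv ho, hx.conj_genF (mulVec_mem_Ecol hy.mem_Elem hu)
          (mulVec_apply_mem _ hv) (by rwa [mulVec_dotProduct_contragredient_mulVec])]
      _ = _ := by simp only [map_mul, Units.val_mul, mulVec_mulVec]

theorem conjActsAs_genF {u v : Fin n → R} (hu : u ∈ Ecol n R) (hv : ∀ i, v i ∈ I)
    (ho : u ⬝ᵥ v = 0) : ConjActsAs (genF I u v) (transvectionGL u v ho) where
  mem_Elem := transvectionGL_mem_Elem_of_left hu ho
  conj_genF {u' v'} hu' hv' ho' := by
    have htu' := mulVec_mem_Ecol (transvectionGL_mem_Elem_of_left hu ho) hu'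
    have htv' := mulVec_apply_mem (contragredient (transvectionGL u v ho)).val hv'
    have hto' := (mulVec_dotProduct_contragredient_mulVec (transvectionGL u v ho) u' v').trans ho'
    rw [contragredient_transvectionGL_val] at htv' hto' ⊢
    rw [genF_eq_of hu hv ho, genF_eq_of hu' hv' ho', genF_eq_of htu' htv' hto']
    exact PresentedGroup.mk_eq_mk_of_mul_inv_mem
      (StarRels.conjF u v u' v' hu hv ho hu' hv' ho' htu' htv' hto')

theorem genF_colM_starCol (hn : 3 ≤ n) {M : GL (Fin n) R} (hM : M ∈ Elem n R) {i j : Fin n}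
    (hij : i ≠ j) {a : R} (ha : a ∈ I) :
    genF I (colM M i) (a • starCol M j) = genS I (a • colM M i) (starCol M j) := by
  have h01 : (0 : Fin n) ≠ 1 := by rw [Ne, Fin.zero_eq_one_iff]; lia
  obtain ⟨N, hN, hcol, hstar⟩ := exists_mem_Elem_colM_eq_starCol_eq hn hM hij h01
  rw [← hcol, ← hstar]
  have hu := colM_mem_Ecol hN 0
  have hv := starCol_mem_Ecol hN 1
  have hau := smul_apply_mem ha (colM N 0)
  have hav := smul_apply_mem ha (starCol N 1)
  have huav := colM_dotProduct_smul_starCol_of_ne N h01 a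
  have hauv := smul_colM_dotProduct_starCol_of_ne N h01 a
  rw [genF_eq_of hu hav huav, genS_eq_of hau hv hauv]
  exact PresentedGroup.mk_eq_mk_of_mul_inv_mem
    (StarRels.coinc N hN a ha hu hav huav hau hv hauv)

theorem conjActsAs_genS (hn : 3 ≤ n) {u v : Fin n → R} (hu : ∀ i, u i ∈ I) (hv : v ∈ Ecol n R)
    (ho : u ⬝ᵥ v = 0) : ConjActsAs (genS I u v) (transvectionGL u v ho) := by
  obtain ⟨M, hM, rfl⟩ := exists_starCol_eq_of_mem_Ecol hv
  induction u, hu, ho using orthogonal_starCol_induction M 0 with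
  | zero =>
    rw [genS_zero hv, transvectionGL_zero_left]
    exact .one
  | add u w hu hw hu₀ hw₀ ihu ihw =>
    rw [genS_add hu hw hv hu₀ hw₀, transvectionGL_add_left hu₀ hw₀]
    exact ihu.mul ihw
  | smul_colM i hi a ha =>
    have ho := colM_dotProduct_smul_starCol_of_ne M hi a
    rw [← genF_colM_starCol hn hM hi ha, transvectionGL_smul_left _ ho]
    exact conjActsAs_genF (colM_mem_Ecol hM i) (smul_apply_mem ha _) ho

theorem ConjActsAs.conj_genS (hn : 3 ≤ n) {x : StStar n R I} {g : GL (Fin n) R}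
    (hx : ConjActsAs x g) {u v : Fin n → R} (hu : ∀ i, u i ∈ I) (hv : v ∈ Ecol n R)
    (ho : u ⬝ᵥ v = 0) :
    x * genS I u v * x⁻¹ = genS I (g.val *ᵥ u) ((contragredient g).val *ᵥ v) := by
  have hgv := mulVec_mem_Ecol (contragredient_mem_Elem hx.mem_Elem) hv
  obtain ⟨M, hM, rfl⟩ := exists_starCol_eq_of_mem_Ecol hv
  induction u, hu, ho using orthogonal_starCol_induction M 0 with
  | zero => rw [genS_zero hv, mulVec_zero, genS_zero hgv, mul_one, mul_inv_cancel]
  | add u w hu hw hu₀ hw₀ ihu ihw =>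
    rw [genS_add hu hw hv hu₀ hw₀, ← conj_mul, ihu, ihw, mulVec_add,
      genS_add (mulVec_apply_mem _ hu) (mulVec_apply_mem _ hw) hgv
        (by rwa [mulVec_dotProduct_contragredient_mulVec])
        (by rwa [mulVec_dotProduct_contragredient_mulVec])]
  | smul_colM i hi a ha =>
    rw [← genF_colM_starCol hn hM hi ha, hx.conj_genF (colM_mem_Ecol hM i) (smul_apply_mem ha _)
      (colM_dotProduct_smul_starCol_of_ne M hi a), mulVec_smul, mulVec_smul, ← colM_mul,
      ← starCol_mul, genF_colM_starCol hn (mul_mem hx.mem_Elem hM) hi ha]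

theorem genS_conj_genS (hn : 3 ≤ n) {u v u' v' : Fin n → R} (hu : ∀ i, u i ∈ I)
    (hv : v ∈ Ecol n R) (ho : u ⬝ᵥ v = 0) (hu' : ∀ i, u' i ∈ I) (hv' : v' ∈ Ecol n R)
    (ho' : u' ⬝ᵥ v' = 0) :
    genS I u v * genS I u' v' * (genS I u v)⁻¹ =
      genS I (tMat u v *ᵥ u') ((1 - vecMulVec v u) *ᵥ v') := by
  rw [(conjActsAs_genS hn hu hv ho).conj_genS hn hu' hv' ho', contragredient_transvectionGL_val]
  rfl

/-- The images of the generators under the anti-automorphism, which is encoded as a homomorphism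
into the opposite group. -/
noncomputable def transposeGen : StarGen n R I → (StStar n R I)ᵐᵒᵖ
  | .F u v _ _ _ => .op (genS I v u)
  | .S u v _ _ _ => .op (genF I v u)

theorem lift_transposeGen_eq_one (hn : 3 ≤ n) {r : FreeGroup (StarGen n R I)}
    (hr : StarRels n R I r) : FreeGroup.lift transposeGen r = 1 := by
  cases hr with
  | addF u v w hu hv hw _ hv₀ hw₀ =>
    rw [dotProduct_comm] at hv₀ hw₀
    simp only [map_mul, map_inv, FreeGroup.lift_apply_of, transposeGen]
    rw [mul_inv_eq_one, ← MulOpposite.op_mul, ← genS_add hw hv hu hw₀ hv₀, add_comm]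
  | addS u w v hu hw _ hv hu₀ hw₀ =>
    rw [dotProduct_comm] at hu₀ hw₀
    simp only [map_mul, map_inv, FreeGroup.lift_apply_of, transposeGen]
    rw [mul_inv_eq_one, ← MulOpposite.op_mul, ← genF_add hv hw hu hw₀ hu₀, add_comm]
  | conjF u v u' v' hu hv ho hu' hv' ho' =>
    rw [dotProduct_comm] at ho ho'
    have hneg : (-v) ⬝ᵥ u = 0 := by rw [neg_dotProduct, ho, neg_zero]
    have hconj := genS_conj_genS (u := -v) hn (fun i => I.neg_mem (hv i)) hu hneg hv' hu' ho'
    rw [genS_neg hv hu ho, inv_inv, tMat, neg_vecMulVec, vecMulVec_neg, ← sub_eq_add_neg,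
      sub_neg_eq_add] at hconj
    simp only [map_mul, map_inv, FreeGroup.lift_apply_of, transposeGen]
    rw [mul_inv_eq_one, ← MulOpposite.op_inv, ← MulOpposite.op_mul, ← MulOpposite.op_mul,
      ← mul_assoc, hconj, tMat]
  | coinc M hM a ha =>
    have h10 : (1 : Fin n) ≠ 0 := by rw [ne_comm, Ne, Fin.zero_eq_one_iff]; lia
    have hcoinc := genF_colM_starCol hn (contragredient_mem_Elem hM) h10 ha
    rw [colM_contragredient, starCol_contragredient] at hcoinc
    simp only [map_mul, map_inv, FreeGroup.lift_apply_of, transposeGen]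
    rw [mul_inv_eq_one, hcoinc]

/-- The anti-automorphism `F(u, v) ↦ S(v, u)`, `S(u, v) ↦ F(v, u)` of `St*(n, R, I)`, the
counterpart of matrix transposition `t(u, v)ᵗ = t(v, u)`. -/
noncomputable def transpose (hn : 3 ≤ n) (x : StStar n R I) : StStar n R I :=
  (PresentedGroup.toGroup (rels := {w | StarRels n R I w})
    (fun _ => lift_transposeGen_eq_one hn) x).unop

lemma transpose_mul (hn : 3 ≤ n) (x y : StStar n R I) :
    transpose hn (x * y) = transpose hn y * transpose hn x := by
  simp only [transpose, map_mul, MulOpposite.unop_mul]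

lemma transpose_of_F (hn : 3 ≤ n) {u v : Fin n → R} (hu : u ∈ Ecol n R) (hv : ∀ i, v i ∈ I)
    (ho : u ⬝ᵥ v = 0) (ho' : v ⬝ᵥ u = 0) :
    transpose hn (PresentedGroup.of (StarGen.F u v hu hv ho)) =
      PresentedGroup.of (StarGen.S v u hv hu ho') := by
  rw [transpose, PresentedGroup.toGroup.of, ← genS_eq_of hv hu ho']
  rfl

lemma transpose_of_S (hn : 3 ≤ n) {u v : Fin n → R} (hu : ∀ i, u i ∈ I) (hv : v ∈ Ecol n R)
    (ho : u ⬝ᵥ v = 0) (ho' : v ⬝ᵥ u = 0) :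
    transpose hn (PresentedGroup.of (StarGen.S u v hu hv ho)) =
      PresentedGroup.of (StarGen.F v u hv hu ho') := by
  rw [transpose, PresentedGroup.toGroup.of, ← genF_eq_of hv hu ho']
  rfl

theorem transpose_involutive (hn : 3 ≤ n) :
    Function.Involutive (transpose hn : StStar n R I → StStar n R I) := by
  let square : StStar n R I →* StStar n R I :=
    MonoidHom.mk' (fun x => transpose hn (transpose hn x)) fun x y => by
      rw [transpose_mul, transpose_mul]
  suffices h : square = MonoidHom.id _ from DFunLike.congr_fun h
  refine PresentedGroup.ext ?_
  rintro (⟨u, v, hu, hv, ho⟩ | ⟨u, v, hu, hv, ho⟩) <;>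
    have ho' : v ⬝ᵥ u = 0 := by rwa [dotProduct_comm]
  · exact (congrArg _ (transpose_of_F hn hu hv ho ho')).trans (transpose_of_S hn hv hu ho' ho)
  · exact (congrArg _ (transpose_of_S hn hu hv ho ho')).trans (transpose_of_F hn hv hu ho' ho)

end StStar

theorem stmt12_general (n : ℕ) (hn : 3 ≤ n) [NeZero n] (R : Type) [CommRing R] (I : Ideal R) :
    ∃ τ : StStar n R I → StStar n R I,
      Function.Bijective τ ∧
      (∀ g h : StStar n R I, τ (g * h) = τ h * τ g) ∧
      (∀ g : StStar n R I, τ (τ g) = g) ∧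
      (∀ (u v : Fin n → R) (hu : u ∈ Ecol n R) (hv : ∀ i, v i ∈ I)
        (ho : dotProduct u v = 0) (ho' : dotProduct v u = 0),
        τ (PresentedGroup.of (StarGen.F u v hu hv ho)) =
          PresentedGroup.of (StarGen.S v u hv hu ho')) ∧
      (∀ (u v : Fin n → R) (hu : ∀ i, u i ∈ I) (hv : v ∈ Ecol n R)
        (ho : dotProduct u v = 0) (ho' : dotProduct v u = 0),
        τ (PresentedGroup.of (StarGen.S u v hu hv ho)) =
          PresentedGroup.of (StarGen.F v u hv hu ho')) := by
  exact ⟨StStar.transpose hn, (StStar.transpose_involutive hn).bijective, StStar.transpose_mul hn,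
    StStar.transpose_involutive hn, fun _ _ => StStar.transpose_of_F hn,
    fun _ _ => StStar.transpose_of_S hn⟩

theorem stmt12 (n : ℕ) (hn : 4 ≤ n) [NeZero n] (R : Type) [CommRing R] (I : Ideal R) :
    ∃ τ : StStar n R I → StStar n R I,
      Function.Bijective τ ∧
      (∀ g h : StStar n R I, τ (g * h) = τ h * τ g) ∧
      (∀ g : StStar n R I, τ (τ g) = g) ∧
      (∀ (u v : Fin n → R) (hu : u ∈ Ecol n R) (hv : ∀ i, v i ∈ I)
        (ho : dotProduct u v = 0) (ho' : dotProduct v u = 0),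
        τ (PresentedGroup.of (StarGen.F u v hu hv ho)) =
          PresentedGroup.of (StarGen.S v u hv hu ho')) ∧
      (∀ (u v : Fin n → R) (hu : ∀ i, u i ∈ I) (hv : v ∈ Ecol n R)
        (ho : dotProduct u v = 0) (ho' : dotProduct v u = 0),
        τ (PresentedGroup.of (StarGen.S u v hu hv ho)) =
          PresentedGroup.of (StarGen.F v u hv hu ho')) := by
  exact stmt12_general n (by lia) R I
end

section
/- Let B be a commutative ring, n ≥ 4, and u, v ∈ Bⁿ with uᵗv = 0. Let I(u) denote the ideal of B generated by the coordinates of u, and let D(u) denote the set of vectors x ∈ Bⁿ that can be written as a finite sum x = Σ_k x_k where each x_k ∈ Bⁿ satisfies uᵗx_k = 0 and has at least two zero coordinates. Then for every b ∈ I(u), the vector v·b belongs to D(u). -/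
/-- The set `D(u)` of vectors decomposing as sums of vectors orthogonal to `u`
with at least two zero coordinates. -/
def Dset {n : ℕ} {B : Type} [CommRing B] (u : Fin n → B) : Set (Fin n → B) :=
  {x | ∃ (N : ℕ) (f : Fin N → (Fin n → B)),
    x = ∑ k, f k ∧
      ∀ k, dotProduct u (f k) = 0 ∧ ∃ p q : Fin n, p ≠ q ∧ f k p = 0 ∧ f k q = 0}

/-!
Since `uᵗv = 0`, the vector `u k • v` equals `∑ j, v j • (u k • e_j - u j • e_k)`. Each summand is a
multiple of a Koszul relation of `u`, which is orthogonal to `u` and supported on `{j, k}`, so it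
vanishes in at least two coordinates as soon as there are four.
-/

section Koszul

variable {ι B : Type*} [DecidableEq ι] [CommRing B]

/-- The Koszul relation `u k • e_j - u j • e_k` between the `j`-th and `k`-th coordinates of `u`;
these are the trivial vectors orthogonal to `u`. -/
def koszulRelation (u : ι → B) (j k : ι) : ι → B :=
  Pi.single j (u k) - Pi.single k (u j)

theorem koszulRelation_apply_of_ne (u : ι → B) {i j k : ι} (hj : i ≠ j) (hk : i ≠ k) :
    koszulRelation u j k i = 0 := by
  simp [koszulRelation, hj, hk]

variable [Fintype ι]

theorem dotProduct_koszulRelation (u : ι → B) (j k : ι) : u ⬝ᵥ koszulRelation u j k = 0 := by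
  simp [koszulRelation, dotProduct_sub, mul_comm]

theorem sum_smul_koszulRelation (u v : ι → B) (k : ι) :
    ∑ j, v j • koszulRelation u j k = u k • v - (u ⬝ᵥ v) • Pi.single k 1 := by
  ext i
  simp [koszulRelation, dotProduct, Pi.single_apply, mul_sub, mul_comm]

theorem smul_mem_span_koszulRelation {u v : ι → B} (huv : u ⬝ᵥ v = 0) {b : B}
    (hb : b ∈ Ideal.span (Set.range u)) :
    b • v ∈ Submodule.span B (Set.range (Function.uncurry (koszulRelation u))) := by
  set K := Submodule.span B (Set.range (Function.uncurry (koszulRelation u)))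
  suffices Ideal.span (Set.range u) ≤ K.comap (LinearMap.toSpanSingleton B _ v) from this hb
  rw [Ideal.span, Submodule.span_le]
  rintro _ ⟨k, rfl⟩
  have expansion : u k • v = ∑ j, v j • koszulRelation u j k := by
    simp [sum_smul_koszulRelation, huv]
  change u k • v ∈ K
  rw [expansion]
  exact K.sum_smul_mem v fun j _ => Submodule.subset_span ⟨(j, k), rfl⟩

end Koszul

section SparseOrthogonal

variable {ι B : Type*} [Fintype ι] [CommRing B]

theorem exists_ne_notMem_pair (hι : 4 ≤ Fintype.card ι) (j k : ι) :
    ∃ p q : ι, p ≠ q ∧ (p ≠ j ∧ p ≠ k) ∧ q ≠ j ∧ q ≠ k := by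
  classical
  have one_lt_card_compl : 1 < (({j, k} : Finset ι)ᶜ).card := by
    have := Finset.card_le_two (a := j) (b := k)
    rw [Finset.card_compl]
    lia
  obtain ⟨p, hp, q, hq, hpq⟩ := Finset.one_lt_card.mp one_lt_card_compl
  exact ⟨p, q, hpq, by simpa using hp, by simpa using hq⟩

/-- The submodule `D(u)` spanned by the vectors orthogonal to `u` with at least two zero
coordinates, for an arbitrary finite index type. Allowing linear combinations in place of sums
changes nothing, as the generators are stable under scaling. -/
def sparseOrthogonal (u : ι → B) : Submodule B (ι → B) :=
  Submodule.span B {x | u ⬝ᵥ x = 0 ∧ ∃ p q, p ≠ q ∧ x p = 0 ∧ x q = 0}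

theorem koszulRelation_mem_sparseOrthogonal [DecidableEq ι] (hι : 4 ≤ Fintype.card ι) (u : ι → B)
    (j k : ι) : koszulRelation u j k ∈ sparseOrthogonal u := by
  obtain ⟨p, q, hpq, ⟨hpj, hpk⟩, hqj, hqk⟩ := exists_ne_notMem_pair hι j k
  exact Submodule.subset_span ⟨dotProduct_koszulRelation u j k, p, q, hpq,
    koszulRelation_apply_of_ne u hpj hpk, koszulRelation_apply_of_ne u hqj hqk⟩

theorem stmt16_general (hι : 4 ≤ Fintype.card ι) {u v : ι → B} (huv : u ⬝ᵥ v = 0) {b : B}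
    (hb : b ∈ Ideal.span (Set.range u)) : b • v ∈ sparseOrthogonal u := by
  classical
  refine Submodule.span_le.mpr ?_ (smul_mem_span_koszulRelation huv hb)
  rintro _ ⟨⟨j, k⟩, rfl⟩
  exact koszulRelation_mem_sparseOrthogonal hι u j k

end SparseOrthogonal

theorem Dset_eq_sparseOrthogonal {n : ℕ} {B : Type} [CommRing B] (u : Fin n → B) :
    Dset u = sparseOrthogonal u := by
  ext x
  constructor
  · rintro ⟨N, f, rfl, hf⟩
    exact Submodule.sum_mem _ fun k _ => Submodule.subset_span (hf k)
  · intro hx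
    obtain ⟨N, c, g, rfl⟩ := Submodule.mem_span_set'.mp hx
    refine ⟨N, fun k => c k • (g k : Fin n → B), rfl, fun k => ?_⟩
    obtain ⟨horth, p, q, hpq, hp, hq⟩ := (g k).2
    exact ⟨by simp [horth], p, q, hpq, by simp [hp], by simp [hq]⟩

theorem stmt16 (B : Type) [CommRing B] (n : ℕ) (hn : 4 ≤ n) (u v : Fin n → B)
    (h : dotProduct u v = 0) (b : B) (hb : b ∈ Ideal.span (Set.range u)) :
    b • v ∈ Dset u := by
  rw [Dset_eq_sparseOrthogonal]
  exact stmt16_general (by simpa using hn) h hb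
end
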